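/- For any log-concave probability density f on ℝ^n with finite sup-norm f_max, the differential entropy satisfies log(1/f_max) ≤ h(f) ≤ log(1/f_max) + n. -/

import Mathlib

/-!
Write `h` for the entropy. The lower bound is `-f log f ≥ f log (1 / fmax)`, integrated.

For the upper bound fix a point `x₀` with `f x₀ > 0` and `0 < t < 1`. Log-concavity gives
`f x₀ ^ t * f x ^ (1 - t) ≤ f (t x₀ + (1 - t) x)`, and integrating over `x` (the right-hand side by
an affine change of variables) gives `f x₀ ^ t * ∫ f ^ (1 - t) ≤ (1 - t) ^ (-n)`.
On the other hand `exp y ≥ 1 + y` gives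
`f x₀ ^ t * f ^ (1 - t) = f * (f x₀ / f) ^ t ≥ f * (1 + t * (log (f x₀) - log f))`, so
`1 + t * (log (f x₀) + h) ≤ (1 - t) ^ (-n)`. Letting `t → 0` yields `h ≤ n - log (f x₀)`, and taking
the supremum over `x₀` yields the claim. The pointwise bounds also squeeze `f log f` between
integrable functions, so that the entropy integral is not a junk value.
-/

open MeasureTheory

/-- A function `f` on `ℝ^n` is log-concave if `f(x) = exp(-g(x))` for some convex function
`g : ℝ^n → (-∞, ∞]`; the effective domain of `g` is encoded as a convex set `s` on which a
real-valued convex function `g` is given, with `f = 0` (i.e. `g = ∞`) outside `s`. -/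
def IsLogConcave (n : ℕ) (f : (Fin n → ℝ) → ℝ) : Prop :=
  ∃ (s : Set (Fin n → ℝ)) (g : (Fin n → ℝ) → ℝ),
    ConvexOn ℝ s g ∧ (∀ x ∈ s, f x = Real.exp (-g x)) ∧ ∀ x ∉ s, f x = 0

namespace IsLogConcave

variable {n : ℕ} {f : (Fin n → ℝ) → ℝ}

lemma nonneg (hf : IsLogConcave n f) (x : Fin n → ℝ) : 0 ≤ f x := by
  obtain ⟨s, g, -, h1, h0⟩ := hf
  by_cases hx : x ∈ s
  · rw [h1 x hx]; positivity
  · rw [h0 x hx]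

lemma rpow_mul_rpow_le (hf : IsLogConcave n f) {t : ℝ} (ht0 : 0 < t) (ht1 : t < 1)
    (x y : Fin n → ℝ) : f x ^ t * f y ^ (1 - t) ≤ f (t • x + (1 - t) • y) := by
  have hnn := hf.nonneg (t • x + (1 - t) • y)
  obtain ⟨s, g, hg, h1, h0⟩ := hf
  have ht : 0 < 1 - t := by linarith
  by_cases hx : x ∈ s
  · by_cases hy : y ∈ s
    · have hz := hg.1 hx hy ht0.le ht.le (by ring)
      have hc := hg.2 hx hy ht0.le ht.le (by ring)
      rw [h1 x hx, h1 y hy, h1 _ hz, ← Real.exp_mul, ← Real.exp_mul, ← Real.exp_add]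
      simp only [smul_eq_mul] at hc
      exact Real.exp_le_exp.2 (by linarith)
    · rwa [h0 y hy, Real.zero_rpow ht.ne', mul_zero]
  · rwa [h0 x hx, Real.zero_rpow ht0.ne', zero_mul]

/-- The tangent-line bound for the exponential, applied to `(a / b) ^ t`; it also holds at
`b = 0`. -/
lemma _root_.mul_one_add_log_le {a b t : ℝ} (ha : 0 < a) (hb : 0 ≤ b) (ht1 : t < 1) :
    b + t * (b * Real.log a - b * Real.log b) ≤ a ^ t * b ^ (1 - t) := by
  rcases hb.eq_or_lt with rfl | hb
  · simp [Real.zero_rpow (by linarith : 1 - t ≠ 0)]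
  · have h : a ^ t * b ^ (1 - t) = b * Real.exp (t * (Real.log a - Real.log b)) := by
      nth_rewrite 2 [← Real.exp_log hb]
      rw [Real.rpow_def_of_pos ha, Real.rpow_def_of_pos hb, ← Real.exp_add, ← Real.exp_add]
      congr 1; ring
    rw [h]
    nlinarith [Real.add_one_le_exp (t * (Real.log a - Real.log b))]

lemma le_comp_affine (hf : IsLogConcave n f) {t : ℝ} (ht0 : 0 < t) (ht1 : t < 1)
    {x₀ : Fin n → ℝ} (hx₀ : 0 < f x₀) (x : Fin n → ℝ) :
    f x + t * (f x * Real.log (f x₀) - f x * Real.log (f x)) ≤ f (t • x₀ + (1 - t) • x) :=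
  (mul_one_add_log_le hx₀ (hf.nonneg x) ht1).trans (hf.rpow_mul_rpow_le ht0 ht1 x₀ x)

lemma _root_.MeasureTheory.Integrable.comp_affine (hi : Integrable f) {t : ℝ} (ht1 : t < 1)
    (x₀ : Fin n → ℝ) : Integrable fun x => f (t • x₀ + (1 - t) • x) :=
  (hi.comp_add_left (t • x₀)).comp_smul (by linarith : 1 - t ≠ 0)

lemma _root_.integral_comp_affine (f : (Fin n → ℝ) → ℝ) {t : ℝ} (ht1 : t < 1) (x₀ : Fin n → ℝ) :
    ∫ x, f (t • x₀ + (1 - t) • x) = ((1 - t) ^ n)⁻¹ * ∫ x, f x := by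
  have h := Measure.integral_comp_smul volume (fun x => f (t • x₀ + x)) (1 - t)
  have hp : 0 < (1 - t) ^ n := pow_pos (by linarith) n
  rw [integral_add_left_eq_self f (t • x₀), Module.finrank_fin_fun,
    abs_of_pos (inv_pos.2 hp)] at h
  exact h

lemma mul_log_le (hf : IsLogConcave n f) {M : ℝ} (hM : ∀ x, f x ≤ M) (x : Fin n → ℝ) :
    f x * Real.log (f x) ≤ f x * Real.log M := by
  rcases (hf.nonneg x).eq_or_lt with h | h
  · simp [← h]
  · exact mul_le_mul_of_nonneg_left (Real.log_le_log h (hM x)) h.le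

lemma integrable_mul_log (hf : IsLogConcave n f) (hi : Integrable f) {M : ℝ}
    (hM : ∀ x, f x ≤ M) {x₀ : Fin n → ℝ} (hx₀ : 0 < f x₀) :
    Integrable fun x => f x * Real.log (f x) := by
  -- `le_comp_affine` at `t = 1 / 2`, solved for `f log f`, is the lower barrier.
  have h1 : Integrable fun x => 2 * f x + f x * Real.log (f x₀)
      - 2 * f ((1 / 2 : ℝ) • x₀ + (1 - 1 / 2 : ℝ) • x) :=
    ((hi.const_mul 2).add (hi.mul_const _)).sub
      ((hi.comp_affine (by norm_num) x₀).const_mul 2)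
  refine integrable_of_le_of_le (hi.1.aemeasurable.mul
    (Real.measurable_log.comp_aemeasurable hi.1.aemeasurable)).aestronglyMeasurable
    (ae_of_all _ fun x => ?_) (ae_of_all _ (hf.mul_log_le hM)) h1 (hi.mul_const _)
  have := hf.le_comp_affine (t := 1 / 2) (by norm_num) (by norm_num) hx₀ x
  simp only
  linarith

lemma one_add_mul_entropy_le (hf : IsLogConcave n f) (hi : Integrable f)
    (hone : ∫ x, f x = 1) (hl : Integrable fun x => f x * Real.log (f x))
    {x₀ : Fin n → ℝ} (hx₀ : 0 < f x₀) {t : ℝ} (ht0 : 0 < t) (ht1 : t < 1) :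
    1 + t * (Real.log (f x₀) - ∫ x, f x * Real.log (f x)) ≤ ((1 - t) ^ n)⁻¹ := by
  have hd : Integrable fun x => t * (f x * Real.log (f x₀) - f x * Real.log (f x)) :=
    ((hi.mul_const _).sub hl).const_mul t
  have h := integral_mono (hi.add hd) (hi.comp_affine ht1 x₀)
    (hf.le_comp_affine ht0 ht1 hx₀)
  simp only [Pi.add_apply] at h
  rwa [integral_comp_affine f ht1, integral_add hi hd, integral_const_mul,
    integral_sub (hi.mul_const _) hl, integral_mul_const, hone, one_mul, mul_one] at h

end IsLogConcave

/-- First-order comparison at `t = 0`, by Bernoulli's inequality. -/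
lemma le_of_forall_one_add_mul_le {n : ℕ} {A : ℝ}
    (h : ∀ t : ℝ, 0 < t → t < 1 → 1 + t * A ≤ ((1 - t) ^ n)⁻¹) : A ≤ n := by
  by_contra! hA
  have hn : (0 : ℝ) ≤ n := n.cast_nonneg
  -- This `t` satisfies `n * A * t < A - n`, which is what contradicts the second-order bound below.
  obtain ⟨t, htdef⟩ : ∃ t : ℝ, t * ((n + 1) * (A + 1)) = A - n :=
    ⟨(A - n) / ((n + 1) * (A + 1)), div_mul_cancel₀ _ (by nlinarith)⟩
  have hD : 0 < (n + 1) * (A + 1) := by nlinarith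
  have ht0 : 0 < t := by
    by_contra! hc
    nlinarith
  have ht1 : t < 1 := by
    by_contra! hc
    nlinarith
  have hp : 0 < (1 - t) ^ n := pow_pos (by linarith) n
  have h1 : (1 + t * A) * (1 - t) ^ n ≤ 1 := by
    have := mul_le_mul_of_nonneg_right (h t ht0 ht1) hp.le
    rwa [inv_mul_cancel₀ hp.ne'] at this
  have h2 : 1 - n * t ≤ (1 - t) ^ n := by
    have := one_add_mul_le_pow (a := -t) (by linarith) n
    rw [← sub_eq_add_neg] at this
    linarith
  have h3 : (1 + t * A) * (1 - n * t) ≤ 1 :=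
    (mul_le_mul_of_nonneg_left h2 (by nlinarith)).trans h1
  have h4 : t * (A - n - n * A * t) ≤ 0 := by linarith
  have h5 : 0 < A - n - n * A * t := by nlinarith
  nlinarith

/-- For any log-concave probability density `f` on `ℝ^n` with finite sup-norm `f_max`,
its differential entropy `h(f) = ∫ -f log f` satisfies
`log(1/f_max) ≤ h(f) ≤ log(1/f_max) + n`. -/
theorem entropy_logconcave_bounds
    (n : ℕ) (f : (Fin n → ℝ) → ℝ) (fmax : ℝ)
    (hf_prob : (∫ x, f x) = 1)
    (hf : IsLogConcave n f)
    (hfmax : IsLUB (Set.range f) fmax) :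
    Real.log (1 / fmax) ≤ (∫ x, -(f x * Real.log (f x))) ∧
      (∫ x, -(f x * Real.log (f x))) ≤ Real.log (1 / fmax) + n := by
  have hi : Integrable f := by
    by_contra hc
    rw [integral_undef hc] at hf_prob
    exact zero_ne_one hf_prob
  have hM : ∀ x, f x ≤ fmax := fun x => hfmax.1 ⟨x, rfl⟩
  obtain ⟨x₀, hx₀⟩ : ∃ x, 0 < f x := by
    by_contra! hc
    have := integral_nonpos (μ := volume) hc
    linarith
  have hpos : 0 < fmax := hx₀.trans_le (hM x₀)
  have hl := hf.integrable_mul_log hi hM hx₀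
  rw [integral_neg, one_div, Real.log_inv]
  constructor
  · have h := integral_mono hl (hi.mul_const _) (hf.mul_log_le hM)
    rw [integral_mul_const, hf_prob, one_mul] at h
    linarith
  · by_contra! hc
    set H := ∫ x, f x * Real.log (f x)
    -- Then `exp (n + H) < fmax`, so some value of `f` exceeds `exp (n + H)`.
    have hlt : Real.exp (n + H) < fmax :=
      (Real.lt_log_iff_exp_lt hpos).1 (by linarith)
    obtain ⟨_, ⟨x, rfl⟩, hx, -⟩ := hfmax.exists_between hlt
    have hxpos : 0 < f x := (Real.exp_pos _).trans hx
    have hle := le_of_forall_one_add_mul_le fun t ht0 ht1 =>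
      hf.one_add_mul_entropy_le hi hf_prob hl hxpos ht0 ht1
    have := (Real.lt_log_iff_exp_lt hxpos).2 hx
    linarith
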